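/- Let p > 1 and d ∈ (−1,1). Then the function κ(d,·) defined on (−1,1) by κ(d,y) = κ₀·(1−d²)^{1/(p−1)}/(1+dy)^{2/(p−1)} is positive, of class C², and is a stationary solution of the one-dimensional similarity equation; that is, for every y ∈ (−1,1): (1/ρ(y))·d/dy( ρ(y)·(1−y²)·∂ᵧκ(d,y) ) − (2(p+1)/(p−1)²)·κ(d,y) + κ(d,y)^{p} = 0. -/

import Mathlib

/-!
Put `a = 2/(p-1)` and `u = 1 + d y`. The function `κ` is a constant times `u ^ (-a)`, so that
`κ' = -a d κ / u`, while `ρ' (1-y²) = -2 a y ρ`. Hence the flux `ρ (1-y²) κ'` has derivative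
`a (a+1) ρ κ · d (2y + d + d y²) / u²`, and `d (2y + d + d y²) = u² - (1-d²)`.
Since `a (a+1) = 2(p+1)/(p-1)²` and `κ ^ (p-1) = a (a+1) (1-d²) / u²`, the three terms of the
equation cancel. The lemmas `hasDerivAt_kap`, `hasDerivAt_flux` and `kap_rpow` carry these facts.
-/

/- STATEMENT 7: For p > 1 and d ∈ (-1,1), the soliton
κ(d,y) = κ₀ (1-d²)^{1/(p-1)} / (1+dy)^{2/(p-1)} is positive and C² on (-1,1),
and is a stationary solution of the one-dimensional similarity equation:
(1/ρ) (ρ(1-y²)κ')' - (2(p+1)/(p-1)²) κ + κ^p = 0 on (-1,1). -/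

open Set

noncomputable section

/-- The weight ρ(y) = (1-y²)^{2/(p-1)}. -/
def rho (p y : ℝ) : ℝ := (1 - y ^ 2) ^ (2 / (p - 1))

/-- The soliton κ(d,y) = κ₀ (1-d²)^{1/(p-1)} / (1+dy)^{2/(p-1)} with
κ₀ = (2(p+1)/(p-1)²)^{1/(p-1)}. -/
def kap (p d y : ℝ) : ℝ :=
  (2 * (p + 1) / (p - 1) ^ 2) ^ (1 / (p - 1)) * (1 - d ^ 2) ^ (1 / (p - 1)) /
    (1 + d * y) ^ (2 / (p - 1))

lemma one_add_mul_pos {d y : ℝ} (hd : d ∈ Set.Ioo (-1 : ℝ) 1) (hy : y ∈ Set.Ioo (-1 : ℝ) 1) :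
    0 < 1 + d * y := by
  obtain ⟨h1, h2⟩ := hd
  obtain ⟨h3, h4⟩ := hy
  nlinarith [mul_pos (sub_pos.2 h2) (sub_pos.2 h4), mul_pos (sub_pos.2 h1) (sub_pos.2 h3)]

lemma one_sub_sq_pos {y : ℝ} (hy : y ∈ Set.Ioo (-1 : ℝ) 1) : 0 < 1 - y ^ 2 := by
  obtain ⟨h3, h4⟩ := hy
  nlinarith

lemma kap_pos {p d y : ℝ} (hp : 1 < p) (hd : d ∈ Set.Ioo (-1 : ℝ) 1)
    (hy : y ∈ Set.Ioo (-1 : ℝ) 1) : 0 < kap p d y := by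
  have h1 := one_add_mul_pos hd hy
  have h2 := one_sub_sq_pos hd
  have h3 : 0 < p - 1 := by linarith
  have h4 : 0 < p + 1 := by linarith
  unfold kap
  positivity

lemma hasDerivAt_kap {p d y : ℝ} (hd : d ∈ Set.Ioo (-1 : ℝ) 1) (hy : y ∈ Set.Ioo (-1 : ℝ) 1) :
    HasDerivAt (kap p d) (-(2 / (p - 1)) * d * kap p d y / (1 + d * y)) y := by
  have hu := one_add_mul_pos hd hy
  have h1 : HasDerivAt (fun z : ℝ => 1 + d * z) d y := by
    simpa using ((hasDerivAt_id y).const_mul d).const_add 1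
  have h2 := h1.rpow_const (p := 2 / (p - 1)) (Or.inl hu.ne')
  have hpos := Real.rpow_pos_of_pos hu (2 / (p - 1))
  have h3 := (hasDerivAt_const y ((2 * (p + 1) / (p - 1) ^ 2) ^ (1 / (p - 1)) *
    (1 - d ^ 2) ^ (1 / (p - 1)))).fun_div h2 hpos.ne'
  refine h3.congr_deriv ?_
  rw [Real.rpow_sub_one hu.ne']
  unfold kap
  generalize 2 / (p - 1) = a at *
  field_simp
  ring

lemma hasDerivAt_rho {p y : ℝ} (hy : y ∈ Set.Ioo (-1 : ℝ) 1) :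
    HasDerivAt (rho p) (-2 * (2 / (p - 1)) * y * rho p y / (1 - y ^ 2)) y := by
  have hw := one_sub_sq_pos hy
  have h1 : HasDerivAt (fun z : ℝ => 1 - z ^ 2) (-(2 * y)) y := by
    simpa using (hasDerivAt_pow 2 y).const_sub 1
  refine (h1.rpow_const (p := 2 / (p - 1)) (Or.inl hw.ne')).congr_deriv ?_
  rw [Real.rpow_sub_one hw.ne']
  unfold rho
  ring

/-- The derivative of the flux `ρ (1-y²) κ'`, with the numerator `d (2y + d + d y²)` already
rewritten as `(1 + d y)² - (1 - d²)`. -/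
lemma hasDerivAt_flux {p d y : ℝ} (hd : d ∈ Set.Ioo (-1 : ℝ) 1)
    (hy : y ∈ Set.Ioo (-1 : ℝ) 1) :
    HasDerivAt (fun z => rho p z * (1 - z ^ 2) * deriv (kap p d) z)
      (2 / (p - 1) * (2 / (p - 1) + 1) * rho p y * kap p d y *
        ((1 + d * y) ^ 2 - (1 - d ^ 2)) / (1 + d * y) ^ 2) y := by
  have hu := one_add_mul_pos hd hy
  have hw := one_sub_sq_pos hy
  have h1 : HasDerivAt (fun z : ℝ => 1 - z ^ 2) (-(2 * y)) y := by
    simpa using (hasDerivAt_pow 2 y).const_sub 1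
  have h2 : HasDerivAt (fun z : ℝ => 1 + d * z) d y := by
    simpa using ((hasDerivAt_id y).const_mul d).const_add 1
  have h3 := ((hasDerivAt_rho (p := p) hy).fun_mul h1).fun_mul
    ((((hasDerivAt_kap (p := p) hd hy).const_mul (-(2 / (p - 1)) * d))).fun_div h2 hu.ne')
  -- the formula for `κ'` holds near `y`, so it may be substituted under the outer derivative
  have h4 : (fun z => rho p z * (1 - z ^ 2) * deriv (kap p d) z) =ᶠ[nhds y]
      fun z => rho p z * (1 - z ^ 2) * (-(2 / (p - 1)) * d * kap p d z / (1 + d * z)) := by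
    filter_upwards [isOpen_Ioo.mem_nhds hy] with z hz
    rw [(hasDerivAt_kap hd hz).deriv]
  refine (h3.congr_of_eventuallyEq h4).congr_deriv ?_
  generalize 2 / (p - 1) = a at *
  have hu' := hu.ne'
  rw [div_mul_cancel₀ _ hw.ne', mul_assoc (-a * d) (_ / _), div_mul_cancel₀ _ hu']
  field_simp
  ring

lemma kap_rpow {p d y : ℝ} (hp : 1 < p) (hd : d ∈ Set.Ioo (-1 : ℝ) 1)
    (hy : y ∈ Set.Ioo (-1 : ℝ) 1) :
    kap p d y ^ p =
      kap p d y * (2 * (p + 1) / (p - 1) ^ 2 * (1 - d ^ 2) / (1 + d * y) ^ 2) := by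
  have hu := one_add_mul_pos hd hy
  have hw := one_sub_sq_pos hd
  have h3 : 0 < p - 1 := by linarith
  have h4 : 0 < p + 1 := by linarith
  have hA : 0 < 2 * (p + 1) / (p - 1) ^ 2 := by positivity
  have key : kap p d y ^ (p - 1) =
      2 * (p + 1) / (p - 1) ^ 2 * (1 - d ^ 2) / (1 + d * y) ^ 2 := by
    unfold kap
    rw [Real.div_rpow (by positivity) (by positivity),
      Real.mul_rpow (by positivity) (by positivity), ← Real.rpow_mul hA.le,
      ← Real.rpow_mul hw.le, ← Real.rpow_mul hu.le, div_mul_cancel₀ _ h3.ne',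
      div_mul_cancel₀ _ h3.ne', Real.rpow_one, Real.rpow_one, Real.rpow_two]
  rw [← key, mul_comm, ← Real.rpow_add_one (kap_pos hp hd hy).ne', sub_add_cancel]

theorem stmt7 (p : ℝ) (hp : 1 < p) (d : ℝ) (hd : d ∈ Set.Ioo (-1 : ℝ) 1) :
    (∀ y ∈ Set.Ioo (-1 : ℝ) 1, 0 < kap p d y) ∧
    ContDiffOn ℝ 2 (kap p d) (Set.Ioo (-1 : ℝ) 1) ∧
    (∀ y ∈ Set.Ioo (-1 : ℝ) 1,
      (1 / rho p y) * deriv (fun z => rho p z * (1 - z ^ 2) * deriv (kap p d) z) y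
        - 2 * (p + 1) / (p - 1) ^ 2 * kap p d y
        + kap p d y ^ p = 0) := by
  refine ⟨fun y hy => kap_pos hp hd hy, ?_, fun y hy => ?_⟩
  · unfold kap
    refine contDiffOn_const.div (ContDiffOn.rpow_const_of_ne (by fun_prop) ?_) ?_
    · exact fun y hy => (one_add_mul_pos hd hy).ne'
    · exact fun y hy => (Real.rpow_pos_of_pos (one_add_mul_pos hd hy) _).ne'
  · rw [(hasDerivAt_flux hd hy).deriv, kap_rpow hp hd hy]
    have hu := (one_add_mul_pos hd hy).ne'
    have hr : rho p y ≠ 0 := (Real.rpow_pos_of_pos (one_sub_sq_pos hy) _).ne'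
    have h3 : p - 1 ≠ 0 := by linarith
    field_simp
    ring

end
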